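/- Let N₁, N₂ ≥ 1 be integers, α₁, α₂ ∈ (0,1), d ≥ 1 an integer, and R > 0. Then the integral 𝒥 = ∫∫ over (s,t), (v,w) ∈ (B_{N₁}(0,R) × B_{N₂}(0,R))² of dsdtdvdw / (|s-v|^{2α₁} + |t-w|^{2α₂})^{d/2} is finite if and only if N₁/α₁ + N₂/α₂ > d. -/

import Mathlib

/-!
Write `A (x, y) = ‖x‖ ^ (2 α₁) + ‖y‖ ^ (2 α₂)` and `Q = N₁ / α₁ + N₂ / α₂`. By the layer-cake formula the
integral of `A (p - p') ^ (-d / 2)` over pairs `p, p'` of points of the domain equals `∫₀^∞ G(t) dt`, where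
`G(t)` is the measure of the pairs with `0 < A (p - p') < ε`, `ε = t ^ (-2 / d)`.

The sublevel set `{A < ε}` lies between the boxes `box (ε / 2)` and `box ε`, where `box δ` is the product
of the balls of radii `δ ^ (1 / (2 αᵢ))` and has volume a constant times `δ ^ (Q / 2)` (`volume_box`).
By translation invariance (`measure_pairs`) the measure of pairs with `p` in a set `B` and difference
in a box is the product of the two volumes. Hence `G(t)` is bounded above by a constant times
`t ^ (-Q / d)` for all `t`, and below by such a multiple for large `t`, where the differences are small
enough for `p'` to stay in the domain as soon as `p` is in the concentric half-size domain. As `G` is also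
bounded, its integral is finite exactly when `t ^ (-Q / d)` is integrable at infinity
(`lintegral_tail_iff`), that is, when `Q > d`.
-/

open MeasureTheory Set

/-- A bounded function on `(0, ∞)` comparable at infinity to `t ^ p` has a finite integral iff
`p < -1`. -/
lemma lintegral_tail_iff (G : ℝ → ENNReal) (p T : ℝ) (hT : 0 < T) (M K k : ENNReal)
    (hM : M ≠ ⊤) (hK : K ≠ ⊤) (hk : k ≠ 0)
    (hGM : ∀ t, G t ≤ M) (hup : ∀ t, 0 < t → G t ≤ K * ENNReal.ofReal (t ^ p))
    (hlow : ∀ t, T < t → k * ENNReal.ofReal (t ^ p) ≤ G t) :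
    (∫⁻ t in Ioi 0, G t) < ⊤ ↔ p < -1 := by
  have hmeas : Measurable fun t : ℝ => ENNReal.ofReal (t ^ p) := by fun_prop
  have hiff : (∫⁻ t in Ioi T, ENNReal.ofReal (t ^ p)) < ⊤ ↔ p < -1 := by
    rw [← integrableOn_Ioi_rpow_iff hT, IntegrableOn, Integrable,
      hasFiniteIntegral_iff_ofReal]
    · exact ⟨fun h => ⟨by fun_prop, h⟩, fun h => h.2⟩
    · filter_upwards [ae_restrict_mem measurableSet_Ioi] with t ht
      exact Real.rpow_nonneg (hT.trans ht).le _
  rw [← hiff]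
  constructor
  · intro h
    have h1 : k * (∫⁻ t in Ioi T, ENNReal.ofReal (t ^ p)) < ⊤ := by
      rw [← lintegral_const_mul _ hmeas]
      refine lt_of_le_of_lt ?_ h
      refine (setLIntegral_mono' measurableSet_Ioi fun t ht => hlow t ht).trans ?_
      exact lintegral_mono_set (Ioi_subset_Ioi hT.le)
    by_contra hcon
    rw [not_lt, top_le_iff] at hcon
    rw [hcon, ENNReal.mul_top hk] at h1
    exact lt_irrefl _ h1
  · intro h
    rw [← Ioc_union_Ioi_eq_Ioi hT.le]
    refine (lintegral_union_le _ _ _).trans_lt (ENNReal.add_lt_top.2 ⟨?_, ?_⟩)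
    · refine (lintegral_mono fun t => hGM t).trans_lt ?_
      rw [setLIntegral_const, Real.volume_Ioc]
      exact ENNReal.mul_lt_top hM.lt_top ENNReal.ofReal_lt_top
    · refine (setLIntegral_mono' measurableSet_Ioi
        fun t ht => hup t (hT.trans ht)).trans_lt ?_
      rw [lintegral_const_mul _ hmeas]
      exact ENNReal.mul_lt_top hK.lt_top h

/-- Translation invariance: the pairs whose first point is in `B` and whose difference is in `E` have
measure `μ B * μ E`. -/
lemma measure_pairs {X : Type*} [AddCommGroup X] [MeasurableSpace X] [MeasurableAdd₂ X]
    [MeasurableNeg X] (μ : Measure X) [SFinite μ] [μ.IsAddLeftInvariant] [μ.IsNegInvariant]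
    {B E : Set X} (hB : MeasurableSet B) (hE : MeasurableSet E) :
    (μ.prod μ) {q | q.1 ∈ B ∧ q.1 - q.2 ∈ E} = μ B * μ E := by
  have hsub : Measurable fun q : X × X => q.1 - q.2 := by
    simp only [sub_eq_add_neg]; fun_prop
  have hm : MeasurableSet {q : X × X | q.1 ∈ B ∧ q.1 - q.2 ∈ E} :=
    (measurable_fst hB).inter (hsub hE)
  rw [Measure.prod_apply hm]
  have : ∀ x, μ (Prod.mk x ⁻¹' {q : X × X | q.1 ∈ B ∧ q.1 - q.2 ∈ E})
      = B.indicator (fun _ => μ E) x := by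
    intro x
    by_cases hx : x ∈ B
    · rw [indicator_of_mem hx]
      have h := (Measure.measurePreserving_sub_left μ x).measure_preimage hE.nullMeasurableSet
      rw [← h]
      congr 1
      ext y
      simp [hx]
    · rw [indicator_of_notMem hx]
      convert measure_empty (μ := μ)
      ext y
      simp [hx]
  simp_rw [this]
  rw [lintegral_indicator_const hB, mul_comm]

/-- The product of the balls `{‖x‖ ^ (2 α₁) < ε}` and `{‖y‖ ^ (2 α₂) < ε}`, which scales anisotropically
in `ε`. -/
def box (N₁ N₂ : ℕ) (α₁ α₂ ε : ℝ) :
    Set (EuclideanSpace ℝ (Fin N₁) × EuclideanSpace ℝ (Fin N₂)) :=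
  Metric.ball 0 (ε ^ (1 / (2 * α₁))) ×ˢ Metric.ball 0 (ε ^ (1 / (2 * α₂)))

lemma measurableSet_box (N₁ N₂ : ℕ) (α₁ α₂ ε : ℝ) : MeasurableSet (box N₁ N₂ α₁ α₂ ε) :=
  measurableSet_ball.prod measurableSet_ball

lemma volume_box (N₁ N₂ : ℕ) (α₁ α₂ : ℝ) {ε : ℝ} (hε : 0 < ε) :
    volume (box N₁ N₂ α₁ α₂ ε) =
      ENNReal.ofReal (ε ^ (((N₁ : ℝ) / α₁ + (N₂ : ℝ) / α₂) / 2)) *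
      volume (Metric.ball (0 : EuclideanSpace ℝ (Fin N₁)) 1 ×ˢ
        Metric.ball (0 : EuclideanSpace ℝ (Fin N₂)) 1) := by
  have key : ε ^ (((N₁ : ℝ) / α₁ + (N₂ : ℝ) / α₂) / 2) =
      (ε ^ (1 / (2 * α₁))) ^ N₁ * (ε ^ (1 / (2 * α₂))) ^ N₂ := by
    rw [← Real.rpow_natCast, ← Real.rpow_natCast, ← Real.rpow_mul hε.le,
      ← Real.rpow_mul hε.le, ← Real.rpow_add hε]
    congr 1
    ring
  rw [box, Measure.volume_eq_prod, Measure.prod_prod, Measure.prod_prod,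
    Measure.addHaar_ball_of_pos _ _ (Real.rpow_pos_of_pos hε _),
    Measure.addHaar_ball_of_pos _ _ (Real.rpow_pos_of_pos hε _), key,
    ENNReal.ofReal_mul (by positivity)]
  simp only [finrank_euclideanSpace, Fintype.card_fin]
  ring

lemma norm_rpow_lt_iff {x α ε : ℝ} (hx : 0 ≤ x) (hα : 0 < α) (hε : 0 < ε) :
    x ^ (2 * α) < ε ↔ x < ε ^ (1 / (2 * α)) := by
  rw [one_div, Real.lt_rpow_inv_iff_of_pos hx hε.le (by positivity)]

lemma lt_one_div_rpow_iff {A t d : ℝ} (hA : 0 < A) (ht : 0 < t) (hd : 0 < d) :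
    t < 1 / A ^ (d / 2) ↔ A < t ^ (-2 / d) := by
  have h : t ^ (-2 / d) = (t⁻¹) ^ (d / 2)⁻¹ := by
    rw [Real.inv_rpow ht.le, ← Real.rpow_neg ht.le]
    congr 1
    field_simp
  rw [h, Real.lt_rpow_inv_iff_of_pos hA.le (by positivity) (by positivity), one_div,
    lt_inv_comm₀ ht (by positivity)]

theorem stmt_13 (N₁ N₂ d : ℕ) (hN₁ : 1 ≤ N₁) (hN₂ : 1 ≤ N₂) (hd : 1 ≤ d)
    (α₁ α₂ : ℝ) (h₁ : α₁ ∈ Ioo (0:ℝ) 1) (h₂ : α₂ ∈ Ioo (0:ℝ) 1)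
    (R : ℝ) (hR : 0 < R) :
    IntegrableOn
      (fun q : (EuclideanSpace ℝ (Fin N₁) × EuclideanSpace ℝ (Fin N₂)) ×
               (EuclideanSpace ℝ (Fin N₁) × EuclideanSpace ℝ (Fin N₂)) =>
        1 / (‖q.1.1 - q.2.1‖ ^ (2 * α₁) + ‖q.1.2 - q.2.2‖ ^ (2 * α₂)) ^ ((d : ℝ) / 2))
      ((Metric.ball 0 R ×ˢ Metric.ball 0 R) ×ˢ (Metric.ball 0 R ×ˢ Metric.ball 0 R))
      ↔ (d : ℝ) < (N₁ : ℝ) / α₁ + (N₂ : ℝ) / α₂ := by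
  have hd0 : (0 : ℝ) < d := by exact_mod_cast hd
  have hα₁ := h₁.1
  have hα₂ := h₂.1
  have : Nonempty (Fin N₁) := ⟨⟨0, hN₁⟩⟩
  have : (volume : Measure (EuclideanSpace ℝ (Fin N₁) × EuclideanSpace ℝ (Fin N₂))).IsAddHaarMeasure := by
    rw [Measure.volume_eq_prod]; infer_instance
  have : (volume : Measure (EuclideanSpace ℝ (Fin N₁) × EuclideanSpace ℝ (Fin N₂))).IsNegInvariant :=
    Measure.IsAddHaarMeasure.isNegInvariant_of_regular _
  let B : ℝ → Set (EuclideanSpace ℝ (Fin N₁) × EuclideanSpace ℝ (Fin N₂)) :=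
    fun r => Metric.ball 0 r ×ˢ Metric.ball 0 r
  have hBm : ∀ r, MeasurableSet (B r) := fun r => measurableSet_ball.prod measurableSet_ball
  have hBtop : ∀ r, volume (B r) ≠ ⊤ := fun r => by
    rw [Measure.volume_eq_prod, Measure.prod_prod]
    exact ENNReal.mul_ne_top measure_ball_lt_top.ne measure_ball_lt_top.ne
  have hB0 : ∀ r, 0 < r → volume (B r) ≠ 0 := fun r hr => by
    rw [Measure.volume_eq_prod, Measure.prod_prod]
    exact mul_ne_zero (Metric.measure_ball_pos _ _ hr).ne' (Metric.measure_ball_pos _ _ hr).ne'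
  set Q : ℝ := (N₁ : ℝ) / α₁ + (N₂ : ℝ) / α₂ with hQ
  set F : (EuclideanSpace ℝ (Fin N₁) × EuclideanSpace ℝ (Fin N₂)) ×
      (EuclideanSpace ℝ (Fin N₁) × EuclideanSpace ℝ (Fin N₂)) → ℝ := fun q =>
    1 / (‖q.1.1 - q.2.1‖ ^ (2 * α₁) + ‖q.1.2 - q.2.2‖ ^ (2 * α₂)) ^ ((d : ℝ) / 2) with hF
  have hFm : Measurable F := by fun_prop
  have hF0 : ∀ q, 0 ≤ F q := fun q => by simp only [hF]; positivity
  change IntegrableOn F (B R ×ˢ B R) ↔ _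
  rw [IntegrableOn, Integrable, and_iff_right hFm.aestronglyMeasurable,
    hasFiniteIntegral_iff_ofReal (Filter.Eventually.of_forall hF0),
    lintegral_eq_lintegral_meas_lt _ (Filter.Eventually.of_forall hF0) hFm.aemeasurable]
  have hpow : ∀ t : ℝ, 0 < t → (t ^ (-2 / (d : ℝ))) ^ (Q / 2) = t ^ (-Q / d) := fun t ht => by
    rw [← Real.rpow_mul ht.le]
    congr 1
    field_simp
  -- For large `t` the box of differences is contained in the half-size domain.
  obtain ⟨T, hT, hTsub⟩ : ∃ T : ℝ, 0 < T ∧ ∀ t, T < t →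
      box N₁ N₂ α₁ α₂ (t ^ (-2 / (d : ℝ)) / 2) ⊆ B (R / 2) := by
    have hlim : Filter.Tendsto (fun t : ℝ => t ^ (-2 / (d : ℝ)) / 2) Filter.atTop (nhds 0) := by
      have := (tendsto_rpow_neg_atTop (y := 2 / (d : ℝ)) (by positivity)).div_const 2
      simpa [neg_div] using this
    have hsmall : ∀ α : ℝ, 0 < α →
        ∀ᶠ t : ℝ in Filter.atTop, (t ^ (-2 / (d : ℝ)) / 2) ^ (1 / (2 * α)) < R / 2 := by
      intro α hα
      have h := hlim.rpow_const (p := 1 / (2 * α)) (Or.inr (by positivity))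
      rw [Real.zero_rpow (by positivity)] at h
      exact h.eventually_lt_const (by positivity)
    obtain ⟨T, hT⟩ := Filter.eventually_atTop.1
      ((hsmall α₁ hα₁).and (hsmall α₂ hα₂))
    refine ⟨max T 1, by positivity, fun t ht => ?_⟩
    have h := hT t ((le_max_left _ _).trans ht.le)
    exact prod_mono (Metric.ball_subset_ball h.1.le) (Metric.ball_subset_ball h.2.le)
  set C := volume (Metric.ball (0 : EuclideanSpace ℝ (Fin N₁)) 1 ×ˢ
        Metric.ball (0 : EuclideanSpace ℝ (Fin N₂)) 1) with hC
  have hC0 : C ≠ 0 := hB0 1 one_pos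
  have hCtop : C ≠ ⊤ := hBtop 1
  have hSm := (hBm R).prod (hBm R)
  rw [lintegral_tail_iff _ (-Q / d) T hT (volume (B R ×ˢ B R)) (volume (B R) * C)
    (volume (B (R / 2)) * (ENNReal.ofReal ((1 / 2) ^ (Q / 2)) * C))]
  · rw [div_lt_iff₀ hd0]
    constructor <;> intro h <;> linarith
  · rw [Measure.volume_eq_prod, Measure.prod_prod]
    exact ENNReal.mul_ne_top (hBtop R) (hBtop R)
  · exact ENNReal.mul_ne_top (hBtop R) hCtop
  · refine mul_ne_zero (hB0 _ (by positivity)) (mul_ne_zero ?_ hC0)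
    rw [ENNReal.ofReal_ne_zero_iff]
    positivity
  · intro t
    rw [Measure.restrict_apply' hSm]
    exact measure_mono inter_subset_right
  · intro t ht
    have hε : 0 < t ^ (-2 / (d : ℝ)) := by positivity
    rw [Measure.restrict_apply' hSm, mul_assoc, mul_comm C, ← hpow t ht,
      ← volume_box N₁ N₂ α₁ α₂ hε, ← measure_pairs volume (hBm R) (measurableSet_box _ _ _ _ _)]
    refine measure_mono ?_
    rintro q ⟨hq, hqS⟩
    refine ⟨hqS.1, ?_⟩
    have hq : t < F q := hq
    have hA0 : 0 ≤ ‖q.1.1 - q.2.1‖ ^ (2 * α₁) := by positivity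
    have hA1 : 0 ≤ ‖q.1.2 - q.2.2‖ ^ (2 * α₂) := by positivity
    -- On the diagonal `F` takes the value `1 / 0 = 0`, so `t < F q` excludes it.
    have hA : 0 < ‖q.1.1 - q.2.1‖ ^ (2 * α₁) + ‖q.1.2 - q.2.2‖ ^ (2 * α₂) := by
      refine lt_of_le_of_ne (by positivity) fun h => ?_
      simp only [hF] at hq
      rw [← h, Real.zero_rpow (by positivity), div_zero] at hq
      exact lt_asymm ht hq
    have hlt := (lt_one_div_rpow_iff hA ht hd0).1 hq
    refine ⟨?_, ?_⟩
    · rw [mem_ball_zero_iff, ← norm_rpow_lt_iff (norm_nonneg _) hα₁ hε]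
      exact lt_of_le_of_lt (le_add_of_nonneg_right hA1) hlt
    · rw [mem_ball_zero_iff, ← norm_rpow_lt_iff (norm_nonneg _) hα₂ hε]
      exact lt_of_le_of_lt (le_add_of_nonneg_left hA0) hlt
  · intro t htT
    have ht : 0 < t := hT.trans htT
    have hε : 0 < t ^ (-2 / (d : ℝ)) / 2 := by positivity
    have hvol : ENNReal.ofReal ((1 / 2) ^ (Q / 2)) * C * ENNReal.ofReal (t ^ (-Q / d))
        = volume (box N₁ N₂ α₁ α₂ (t ^ (-2 / (d : ℝ)) / 2) \ {0}) := by
      rw [measure_sdiff_null (by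
          rw [Measure.volume_eq_prod]; exact measure_singleton _),
        volume_box N₁ N₂ α₁ α₂ hε, ← hQ, ← hC, div_eq_mul_one_div (t ^ _) 2,
        Real.mul_rpow (by positivity) (by positivity), hpow t ht,
        ENNReal.ofReal_mul (by positivity)]
      ring
    rw [Measure.restrict_apply' hSm, mul_assoc, hvol, ← measure_pairs volume (hBm (R / 2))
      ((measurableSet_box _ _ _ _ _).diff (measurableSet_singleton 0))]
    refine measure_mono ?_
    rintro q ⟨hq1, hq2, hq0⟩
    have hq3 := hTsub t htT hq2
    have hx := hq1.1
    have hy := hq1.2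
    have hu := hq3.1
    have hv := hq3.2
    have hbu := hq2.1
    have hbv := hq2.2
    simp only [mem_ball_zero_iff, Prod.fst_sub, Prod.snd_sub] at hx hy hu hv hbu hbv
    refine ⟨?_, ⟨?_, ?_⟩, ?_, ?_⟩
    · change t < F q
      rw [← norm_rpow_lt_iff (norm_nonneg _) hα₁ hε] at hbu
      rw [← norm_rpow_lt_iff (norm_nonneg _) hα₂ hε] at hbv
      refine (lt_one_div_rpow_iff ?_ ht hd0).2 (by linarith)
      by_cases h : q.1.1 - q.2.1 = 0
      · have h' : q.1.2 - q.2.2 ≠ 0 := fun h' => hq0 (Prod.ext h h')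
        have := norm_pos_iff.2 h'
        positivity
      · have := norm_pos_iff.2 h
        positivity
    · rw [mem_ball_zero_iff]; linarith
    · rw [mem_ball_zero_iff]; linarith
    · rw [mem_ball_zero_iff]
      have := norm_sub_le q.1.1 (q.1.1 - q.2.1)
      rw [sub_sub_cancel] at this
      linarith
    · rw [mem_ball_zero_iff]
      have := norm_sub_le q.1.2 (q.1.2 - q.2.2)
      rw [sub_sub_cancel] at this
      linarith
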